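/- arXiv:2205.12718 — 3 statements merged into one kernel-verified Lean document; each statement's English description precedes it below -/
import Mathlib

section
/- For real numbers μ₁, μ₂ and σ > 0, and any order α > 1, the Rényi divergence of order α between the one-dimensional Gaussian distributions N(μ₁, σ²) and N(μ₂, σ²) equals α(μ₁ − μ₂)²/(2σ²); that is, (1/(α − 1)) · log ∫_ℝ p(x)^α · q(x)^(1−α) dx = α(μ₁ − μ₂)²/(2σ²), where p and q are the probability density functions of N(μ₁, σ²) and N(μ₂, σ²) respectively. -/
open Real MeasureTheory

/-- The probability density function of the one-dimensional Gaussian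
distribution `N(μ, σ²)`. -/
noncomputable def gaussianPdf (μ σ x : ℝ) : ℝ :=
  (1 / (σ * Real.sqrt (2 * Real.pi))) * Real.exp (-(x - μ) ^ 2 / (2 * σ ^ 2))

/-- The Rényi divergence of order `α > 1` between the Gaussian distributions
`N(μ₁, σ²)` and `N(μ₂, σ²)` equals `α (μ₁ - μ₂)² / (2σ²)`. -/
theorem renyiDiv_gaussian_eq (μ₁ μ₂ σ α : ℝ) (hσ : 0 < σ) (hα : 1 < α) :
    (1 / (α - 1)) *
      Real.log (∫ x : ℝ, gaussianPdf μ₁ σ x ^ α * gaussianPdf μ₂ σ x ^ (1 - α)) =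
    α * (μ₁ - μ₂) ^ 2 / (2 * σ ^ 2) := by
  have hs : 0 < σ * Real.sqrt (2 * Real.pi) := by positivity
  obtain ⟨v, hvσ⟩ : ∃ v : NNReal, (v : ℝ) = σ ^ 2 :=
    ⟨Real.toNNReal (σ ^ 2), Real.coe_toNNReal _ (sq_nonneg σ)⟩
  have hv : v ≠ 0 := by
    intro h
    rw [h] at hvσ
    exact (pow_pos hσ 2).ne hvσ
  have key : ∀ x : ℝ, gaussianPdf μ₁ σ x ^ α * gaussianPdf μ₂ σ x ^ (1 - α) =
      Real.exp (α * (α - 1) * (μ₁ - μ₂) ^ 2 / (2 * σ ^ 2)) *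
        ProbabilityTheory.gaussianPDFReal (α * μ₁ + (1 - α) * μ₂) v x := by
    intro x
    have hc : 0 < 1 / (σ * Real.sqrt (2 * Real.pi)) := by positivity
    have hsq : Real.sqrt (2 * Real.pi * σ ^ 2) = σ * Real.sqrt (2 * Real.pi) := by
      rw [Real.sqrt_mul (by positivity), Real.sqrt_sq hσ.le, mul_comm]
    unfold gaussianPdf ProbabilityTheory.gaussianPDFReal
    rw [hvσ]
    rw [hsq, Real.mul_rpow hc.le (Real.exp_pos _).le, Real.mul_rpow hc.le (Real.exp_pos _).le,
      ← Real.exp_mul, ← Real.exp_mul, mul_mul_mul_comm, ← Real.rpow_add hc, ← Real.exp_add,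
      mul_left_comm, ← Real.exp_add, add_sub_cancel, Real.rpow_one, one_div]
    congr 2
    field_simp
    ring
  simp_rw [key]
  rw [integral_const_mul, ProbabilityTheory.integral_gaussianPDFReal_eq_one _ hv, mul_one,
    Real.log_exp]
  have : α - 1 ≠ 0 := by linarith
  field_simp
end

section
/- (Privacy bound of the Gaussian mechanism, real-valued case.) Let f be a real-valued function of datasets with global sensitivity at most R > 0, i.e. |f(D) − f(D′)| ≤ R for every pair of adjacent datasets D, D′. For σ > 0, the Gaussian mechanism M(D) = f(D) + R·N(0, σ²), whose output distribution on input D is N(f(D), R²σ²), satisfies (α, α/(2σ²))-Rényi differential privacy for every α > 1: for all adjacent D, D′, the Rényi divergence of order α between N(f(D), R²σ²) and N(f(D′), R²σ²) is at most α/(2σ²). -/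
open Real MeasureTheory ProbabilityTheory

/-- The Rényi divergence of order `α` between measures `P` and `Q`:
`D_α(P‖Q) = (α - 1)⁻¹ · log ∫ (dP/dQ)^α dQ`. -/
noncomputable def renyiDiv {Ω : Type*} [MeasurableSpace Ω]
    (P Q : Measure Ω) (α : ℝ) : ℝ :=
  (α - 1)⁻¹ * Real.log (∫ x, (P.rnDeriv Q x).toReal ^ α ∂Q)

lemma gaussian_withDensity_aux (a b : ℝ) (v : NNReal) (hv : v ≠ 0) :
    gaussianReal a v = (gaussianReal b v).withDensity
      (fun x => ENNReal.ofReal (Real.exp ((a - b) / v * x - (a ^ 2 - b ^ 2) / (2 * v)))) := by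
  have hv' : (v : ℝ) ≠ 0 := by exact_mod_cast hv
  rw [gaussianReal_of_var_ne_zero a hv, gaussianReal_of_var_ne_zero b hv,
    ← withDensity_mul _ (measurable_gaussianPDF b v) (by fun_prop)]
  congr 1
  ext x
  simp only [Pi.mul_apply, gaussianPDF]
  rw [← ENNReal.ofReal_mul (gaussianPDFReal_nonneg b v x)]
  congr 1
  simp only [gaussianPDFReal]
  rw [mul_assoc (√(2 * π * v))⁻¹ (Real.exp _) (Real.exp _), ← Real.exp_add]
  congr 2
  field_simp
  ring

lemma renyiDiv_gaussian_aux (a b α : ℝ) (v : NNReal) (hv : v ≠ 0) (hα : 1 < α) :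
    renyiDiv (gaussianReal a v) (gaussianReal b v) α = α * (a - b) ^ 2 / (2 * v) := by
  have hv' : (v : ℝ) ≠ 0 := by exact_mod_cast hv
  have hα' : α - 1 ≠ 0 := by linarith
  have h1 : (gaussianReal a v).rnDeriv (gaussianReal b v) =ᵐ[gaussianReal b v]
      (fun x => ENNReal.ofReal (Real.exp ((a - b) / v * x - (a ^ 2 - b ^ 2) / (2 * v)))) := by
    rw [gaussian_withDensity_aux a b v hv]
    exact Measure.rnDeriv_withDensity _ (by fun_prop)
  have h2 : ∫ x, ((gaussianReal a v).rnDeriv (gaussianReal b v) x).toReal ^ α ∂(gaussianReal b v)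
      = ∫ x, Real.exp (-(α * (a ^ 2 - b ^ 2) / (2 * v))) * Real.exp (α * (a - b) / v * x)
        ∂(gaussianReal b v) := by
    apply integral_congr_ae
    filter_upwards [h1] with x hx
    rw [hx, ENNReal.toReal_ofReal (Real.exp_nonneg _), ← Real.exp_mul, ← Real.exp_add]
    congr 1
    ring
  have h3 : ∫ x, Real.exp (α * (a - b) / v * x) ∂(gaussianReal b v)
      = Real.exp (b * (α * (a - b) / v) + v * (α * (a - b) / v) ^ 2 / 2) :=
    congrFun (mgf_id_gaussianReal (μ := b) (v := v)) (α * (a - b) / v)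
  rw [renyiDiv, h2, integral_const_mul, h3, ← Real.exp_add, Real.log_exp]
  field_simp
  ring

/-- Privacy bound of the Gaussian mechanism (real-valued case): if `f` has global
sensitivity at most `R` with respect to an adjacency relation, then the mechanism
`D ↦ N(f(D), R²σ²)` satisfies `(α, α/(2σ²))`-Rényi differential privacy for
every `α > 1`. -/
theorem gaussian_mechanism_renyiDP {Dataset : Type*}
    (Adjacent : Dataset → Dataset → Prop) (f : Dataset → ℝ)
    (R σ : ℝ) (hR : 0 < R) (hσ : 0 < σ)
    (hsens : ∀ D D', Adjacent D D' → |f D - f D'| ≤ R) :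
    ∀ α : ℝ, 1 < α → ∀ D D', Adjacent D D' →
      renyiDiv (gaussianReal (f D) (Real.toNNReal (R ^ 2 * σ ^ 2)))
        (gaussianReal (f D') (Real.toNNReal (R ^ 2 * σ ^ 2))) α ≤
      α / (2 * σ ^ 2) := by
  intro α hα D D' hadj
  have hpos : 0 < R ^ 2 * σ ^ 2 := by positivity
  have hv : Real.toNNReal (R ^ 2 * σ ^ 2) ≠ 0 := by
    simpa using hpos
  rw [renyiDiv_gaussian_aux _ _ _ _ hv hα, Real.coe_toNNReal _ hpos.le]
  have hsq : (f D - f D') ^ 2 ≤ R ^ 2 := sq_le_sq' (by linarith [abs_le.mp (hsens D D' hadj)])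
    (abs_le.mp (hsens D D' hadj)).2
  rw [div_le_div_iff₀ (by positivity) (by positivity)]
  have : 0 ≤ α * (2 * σ ^ 2) := by positivity
  nlinarith [mul_le_mul_of_nonneg_left hsq this]
end

section
/- For vectors μ, ν ∈ ℝ^d, s > 0, and any order α > 1, the Rényi divergence of order α between the product Gaussian measures N(μ, s²I) = ⊗_{i=1}^d N(μ_i, s²) and N(ν, s²I) = ⊗_{i=1}^d N(ν_i, s²) on ℝ^d equals α‖μ − ν‖²/(2s²), where ‖·‖ is the Euclidean norm. -/
open Real MeasureTheory ProbabilityTheory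

open scoped NNReal ENNReal in
noncomputable def gRatio (m n : ℝ) (v : ℝ≥0) (y : ℝ) : ℝ :=
  Real.exp ((m - n) / v * y - (m ^ 2 - n ^ 2) / (2 * v))

open scoped NNReal ENNReal in
lemma gRatio_meas (m n : ℝ) (v : ℝ≥0) : Measurable (gRatio m n v) := by
  unfold gRatio; fun_prop

open scoped NNReal ENNReal in
lemma gRatio_rpow (m n : ℝ) (v : ℝ≥0) (a y : ℝ) :
    gRatio m n v y ^ a = Real.exp ((a * (m - n) / v) * y) * Real.exp (- (a * (m ^ 2 - n ^ 2) / (2 * v))) := by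
  unfold gRatio
  rw [← Real.exp_mul, ← Real.exp_add]
  congr 1
  ring

open scoped NNReal ENNReal in
lemma gRatio_integral (m n : ℝ) (v : ℝ≥0) (hv : v ≠ 0) (a : ℝ) :
    ∫ y, gRatio m n v y ^ a ∂(gaussianReal n v) =
      Real.exp (a * (a - 1) * (m - n) ^ 2 / (2 * v)) := by
  simp_rw [gRatio_rpow]
  rw [integral_mul_const]
  have h := congrFun (mgf_fun_id_gaussianReal (μ := n) (v := v)) (a * (m - n) / v)
  unfold mgf at h
  rw [h, ← Real.exp_add]
  have : (v : ℝ) ≠ 0 := by exact_mod_cast hv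
  congr 1
  field_simp
  ring

open scoped NNReal ENNReal in
lemma gRatio_integrable (m n : ℝ) (v : ℝ≥0) :
    Integrable (gRatio m n v) (gaussianReal n v) := by
  have h := (integrable_exp_mul_gaussianReal (μ := n) (v := v) (1 * (m - n) / v)).mul_const
    (Real.exp (- (1 * (m ^ 2 - n ^ 2) / (2 * v))))
  refine h.congr (Filter.Eventually.of_forall fun y => ?_)
  simp only [← gRatio_rpow, Real.rpow_one]

open scoped NNReal ENNReal in
lemma gRatio_withDensity (m n : ℝ) (v : ℝ≥0) (hv : v ≠ 0) :
    gaussianReal m v = (gaussianReal n v).withDensity (fun y => ENNReal.ofReal (gRatio m n v y)) := by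
  rw [gaussianReal_of_var_ne_zero _ hv, gaussianReal_of_var_ne_zero _ hv,
    ← withDensity_mul _ (measurable_gaussianPDF _ _) (gRatio_meas m n v).ennreal_ofReal]
  congr 1
  ext y
  simp only [gaussianPDF, Pi.mul_apply]
  rw [← ENNReal.ofReal_mul (gaussianPDFReal_nonneg _ _ _)]
  congr 1
  unfold gaussianPDFReal gRatio
  rw [mul_assoc _ (Real.exp _) (Real.exp _), ← Real.exp_add]
  have : (v : ℝ) ≠ 0 := by exact_mod_cast hv
  congr 2
  field_simp
  ring

open scoped NNReal ENNReal in
lemma pi_gRatio (d : ℕ) (μ ν : Fin d → ℝ) (v : ℝ≥0) (hv : v ≠ 0) :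
    (Measure.pi fun i => gaussianReal (μ i) v) =
      (Measure.pi fun i => gaussianReal (ν i) v).withDensity
        (fun x => ENNReal.ofReal (∏ i, gRatio (μ i) (ν i) v (x i))) := by
  have hpos : ∀ m n y, 0 ≤ gRatio m n v y := fun m n y => (Real.exp_pos _).le
  refine (Measure.pi_eq fun t ht => ?_)
  rw [withDensity_apply _ (MeasurableSet.univ_pi ht), Measure.restrict_pi_pi,
    ← ofReal_integral_eq_lintegral_ofReal,
    integral_fintype_prod_eq_prod (fun i y => gRatio (μ i) (ν i) v y),
    ENNReal.ofReal_prod_of_nonneg (fun i _ => integral_nonneg fun y => hpos _ _ _)]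
  · refine Finset.prod_congr rfl fun i _ => ?_
    rw [gRatio_withDensity (μ i) (ν i) v hv, withDensity_apply _ (ht i),
      ofReal_integral_eq_lintegral_ofReal (gRatio_integrable _ _ _).restrict]
    exact Filter.Eventually.of_forall fun y => hpos _ _ _
  · exact Integrable.fintype_prod (f := fun i y => gRatio (μ i) (ν i) v y)
      fun i => (gRatio_integrable _ _ _).restrict
  · exact Filter.Eventually.of_forall fun y => Finset.prod_nonneg fun i _ => hpos _ _ _

/-- The Rényi divergence of order `α > 1` between the spherical Gaussians
`N(μ, s²I) = ⊗ᵢ N(μᵢ, s²)` and `N(ν, s²I) = ⊗ᵢ N(νᵢ, s²)` on `ℝ^d` equals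
`α ‖μ - ν‖² / (2 s²)` (Euclidean norm). -/
theorem renyiDiv_pi_gaussian (d : ℕ) (μ ν : Fin d → ℝ) (s α : ℝ)
    (hs : 0 < s) (hα : 1 < α) :
    renyiDiv (Measure.pi fun i => gaussianReal (μ i) (Real.toNNReal (s ^ 2)))
        (Measure.pi fun i => gaussianReal (ν i) (Real.toNNReal (s ^ 2))) α =
      α * (∑ i, (μ i - ν i) ^ 2) / (2 * s ^ 2) := by
  have hv : Real.toNNReal (s ^ 2) ≠ 0 := by
    simp [Real.toNNReal_eq_zero, hs.ne']
  have hvs : ((Real.toNNReal (s ^ 2) : NNReal) : ℝ) = s ^ 2 := Real.coe_toNNReal _ (by positivity)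
  generalize Real.toNNReal (s ^ 2) = v at hv hvs
  have hpos : ∀ m n y, 0 ≤ gRatio m n v y := fun m n y => (Real.exp_pos _).le
  unfold renyiDiv
  have hd := pi_gRatio d μ ν v hv
  have hm : Measurable (fun x : Fin d → ℝ =>
      ENNReal.ofReal (∏ i, gRatio (μ i) (ν i) v (x i))) :=
    (Finset.measurable_fun_prod _ fun i _ =>
      (gRatio_meas (μ i) (ν i) v).comp (measurable_pi_apply i)).ennreal_ofReal
  have hr := Measure.rnDeriv_withDensity (Measure.pi fun i => gaussianReal (ν i) v) hm
  rw [← hd] at hr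
  have hI : ∫ x, ((Measure.pi fun i => gaussianReal (μ i) v).rnDeriv
      (Measure.pi fun i => gaussianReal (ν i) v) x).toReal ^ α
        ∂(Measure.pi fun i => gaussianReal (ν i) v) =
      ∫ x, ∏ i, gRatio (μ i) (ν i) v (x i) ^ α ∂(Measure.pi fun i => gaussianReal (ν i) v) := by
    refine integral_congr_ae ?_
    filter_upwards [hr] with x hx
    rw [hx, ENNReal.toReal_ofReal (Finset.prod_nonneg fun i _ => hpos _ _ _),
      Real.finsetProd_rpow _ _ (fun i _ => hpos _ _ _)]
  rw [hI, integral_fintype_prod_eq_prod (fun i y => gRatio (μ i) (ν i) v y ^ α)]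
  simp_rw [gRatio_integral _ _ v hv]
  rw [← Real.exp_sum, Real.log_exp, hvs, ← Finset.sum_div, ← Finset.mul_sum]
  have : α - 1 ≠ 0 := by linarith
  field_simp
end
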